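/- For all natural numbers n and c, Σ_{ℓ=0}^{n} K₃(n,ℓ,c) = B₂(n,c). -/

import Mathlib

/-- The sequence `B` with `B 0 = B 1 = 1` and, for `n ≥ 1`,
`B (2n) = (1/2) · ∑_{k=0}^{2n-1} B (2n-1-k) · B k` and
`B (2n+1) = (1/2) · (∑_{k=0}^{2n} B (2n-k) · B k + B n)`. -/
def B : ℕ → ℚ
  | 0 => 1
  | 1 => 1
  | n + 2 =>
    (1 / 2) * ((∑ k ∈ (Finset.range (n + 2)).attach, B (n + 1 - k.1) * B k.1)
      + if (n + 2) % 2 = 0 then 0 else B ((n + 1) / 2))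
termination_by n => n
decreasing_by
  · omega
  · have := Finset.mem_range.mp k.2; omega
  · omega

/-- The array `B2 n k` of 2-colored non-isomorphic binary tree counts: base cases
`B2 0 0 = B2 1 0 = B2 1 1 = 1`, `B2 0 k = 0` for `k > 0`, `B2 1 k = 0` for `k > 1`,
`B2 n 0 = B n` for `n > 1`, `B2 n k = 0` for `k > n`; and for `k > 0` the recurrences
`B2 (2n) k = (1/2) · ∑_{r=0}^{1} ∑_{ℓ=0}^{2n-1} ∑_{m=0}^{k-r} B2 ℓ m · B2 (2n-1-ℓ) (k-r-m)`,
`B2 (2n+1) (2k) = (1/2) · (∑_{r=0}^{1} ∑_{ℓ=0}^{2n} ∑_{m=0}^{2k-r} B2 ℓ m · B2 (2n-ℓ) (2k-r-m) + B2 n k)`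
and similarly
`B2 (2n+1) (2k+1) = (1/2) · (∑_{r=0}^{1} ∑_{ℓ=0}^{2n} ∑_{m=0}^{2k+r} B2 ℓ m · B2 (2n-ℓ) (2k+r-m) + B2 n k)`. -/
def B2 : ℕ → ℕ → ℚ
  | 0, k => if k = 0 then 1 else 0
  | 1, k => if k ≤ 1 then 1 else 0
  | n + 2, k =>
    if k = 0 then B (n + 2)
    else if n + 2 < k then 0
    else
      (1 / 2) * ((∑ r ∈ Finset.range 2, ∑ l ∈ (Finset.range (n + 2)).attach,
          ∑ m ∈ Finset.range (k - r + 1), B2 l.1 m * B2 (n + 1 - l.1) (k - r - m))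
        + if (n + 2) % 2 = 0 then 0 else B2 ((n + 1) / 2) (k / 2))
termination_by n k => n
decreasing_by
  · have := Finset.mem_range.mp l.2; omega
  · omega
  · omega

open Classical in
/-- The array `K3 n ℓ c`: base cases (taking precedence) `K3 0 0 0 = 1`; `K3 n ℓ c = 0`
whenever `ℓ ≥ n > 0` or `c > n`; `K3 n (n-1) c = C(n,c)` for `n ≥ 1` and `0 ≤ c ≤ n`;
`K3 n 0 c = 1` if `n = 2^r - 1` for some `r ≥ 1` and `0 ≤ c ≤ n`, and `K3 n 0 c = 0` for
other `n ≥ 1`; otherwise, for `p, q, r ∈ {0,1}`,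
`K3 (2n+p) (2ℓ+q) (2c+r) = p·(-1/2)^q·K3 n ℓ c + (1/2) · ∑_{δ=0, δ≤2c+r}^{1} ∑_{k=0}^{2n+p-1}
∑_{v=0}^{2ℓ+q-1} ∑_{m=0}^{2c+r-δ} K3 k v m · K3 (2n+p-1-k) (2ℓ+q-1-v) (2c+r-δ-m)`. -/
noncomputable def K3 : ℕ → ℕ → ℕ → ℚ
  | 0, l, c => if l = 0 ∧ c = 0 then 1 else 0
  | n + 1, l, c =>
    if n + 1 ≤ l ∨ n + 1 < c then 0
    else if l = n then ((n + 1).choose c : ℚ)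
    else if l = 0 then (if ∃ r : ℕ, 1 ≤ r ∧ n + 1 = 2 ^ r - 1 then 1 else 0)
    else
      (if (n + 1) % 2 = 1 then ((-1 : ℚ) / 2) ^ (l % 2) * K3 ((n + 1) / 2) (l / 2) (c / 2)
        else 0)
      + (1 / 2) * ∑ δ ∈ Finset.range 2, if δ ≤ c then
          (∑ k ∈ (Finset.range (n + 1)).attach, ∑ v ∈ Finset.range l,
            ∑ m ∈ Finset.range (c - δ + 1),
              K3 k.1 v m * K3 (n - k.1) (l - 1 - v) (c - δ - m)) else 0
termination_by n l c => n
decreasing_by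
  · omega
  · have := Finset.mem_range.mp k.2; omega
  · omega

theorem K3_c_gt (n l c : ℕ) (h : n < c) : K3 n l c = 0 := by
  cases n with
  | zero => rw [K3, if_neg]; omega
  | succ n => rw [K3, if_pos]; omega

theorem K3_l_ge (n l c : ℕ) (hn : 0 < n) (h : n ≤ l) : K3 n l c = 0 := by
  cases n with
  | zero => omega
  | succ n => rw [K3, if_pos]; omega

theorem K3_l_gt (n l c : ℕ) (h : n < l) : K3 n l c = 0 := by
  cases n with
  | zero => rw [K3, if_neg]; omega
  | succ n => rw [K3, if_pos]; omega

theorem K3_zero (l c : ℕ) : K3 0 l c = if l = 0 ∧ c = 0 then 1 else 0 := by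
  rw [K3]

theorem K3_top (n c : ℕ) : K3 (n + 1) n c = ((n + 1).choose c : ℚ) := by
  by_cases h : n + 1 < c
  · rw [K3_c_gt _ _ _ h, Nat.choose_eq_zero_of_lt h]; simp
  · rw [K3, if_neg (by omega), if_pos rfl]

/-- The convolution of two arrays. -/
def conv (F : ℕ → ℕ → ℚ) (n c : ℕ) : ℚ :=
  ∑ k ∈ Finset.range (n + 1), ∑ m ∈ Finset.range (c + 1), F k m * F (n - k) (c - m)

/-- The convolution in three indices. -/
noncomputable def conv3 (n l c : ℕ) : ℚ :=
  ∑ k ∈ Finset.range (n + 1), ∑ v ∈ Finset.range l, ∑ m ∈ Finset.range (c + 1),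
    K3 k v m * K3 (n - k) (l - 1 - v) (c - m)

theorem conv3_c_gt (n l c : ℕ) (h : n < c) : conv3 n l c = 0 := by
  unfold conv3
  refine Finset.sum_eq_zero fun k hk => Finset.sum_eq_zero fun v _ =>
    Finset.sum_eq_zero fun m hm => ?_
  simp only [Finset.mem_range] at hk hm
  by_cases h1 : k < m
  · rw [K3_c_gt k v m h1, zero_mul]
  · rw [K3_c_gt (n - k) _ (c - m) (by omega), mul_zero]

theorem conv3_l_gt (n l c : ℕ) (h : n + 1 < l) : conv3 n l c = 0 := by
  unfold conv3
  refine Finset.sum_eq_zero fun k hk => Finset.sum_eq_zero fun v hv =>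
    Finset.sum_eq_zero fun m hm => ?_
  simp only [Finset.mem_range] at hk hm hv
  by_cases h1 : k < v
  · rw [K3_l_gt k v m h1, zero_mul]
  · rw [K3_l_gt (n - k) _ (c - m) (by omega), mul_zero]

theorem conv3_l_eq (n c : ℕ) (hn : 0 < n) : conv3 n (n + 1) c = 0 := by
  unfold conv3
  refine Finset.sum_eq_zero fun k hk => Finset.sum_eq_zero fun v hv =>
    Finset.sum_eq_zero fun m hm => ?_
  simp only [Finset.mem_range] at hk hm hv
  by_cases h1 : k < v
  · rw [K3_l_gt k v m h1, zero_mul]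
  by_cases h2 : n - k < n + 1 - 1 - v
  · rw [K3_l_gt (n - k) _ (c - m) h2, mul_zero]
  by_cases h3 : 0 < k
  · rw [K3_l_ge k v m h3 (by omega), zero_mul]
  · rw [K3_l_ge (n - k) _ (c - m) (by omega) (by omega), mul_zero]

theorem conv3_top (n c : ℕ) : conv3 (n + 1) (n + 1) c = 2 * ((n + 1).choose c : ℚ) := by
  unfold conv3
  rw [Finset.sum_range_succ, Finset.sum_range_succ']
  have h0 : ∑ k ∈ Finset.range n, ∑ v ∈ Finset.range (n + 1), ∑ m ∈ Finset.range (c + 1),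
      K3 (k + 1) v m * K3 (n + 1 - (k + 1)) (n + 1 - 1 - v) (c - m) = 0 := by
    refine Finset.sum_eq_zero fun k hk => Finset.sum_eq_zero fun v hv =>
      Finset.sum_eq_zero fun m hm => ?_
    simp only [Finset.mem_range] at hk hm hv
    by_cases h1 : k + 1 ≤ v
    · rw [K3_l_ge (k + 1) v m (by omega) h1, zero_mul]
    · rw [K3_l_ge (n + 1 - (k + 1)) _ (c - m) (by omega) (by omega), mul_zero]
  rw [h0]
  have h1 : ∑ v ∈ Finset.range (n + 1), ∑ m ∈ Finset.range (c + 1),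
      K3 0 v m * K3 (n + 1 - 0) (n + 1 - 1 - v) (c - m) = ((n + 1).choose c : ℚ) := by
    rw [Finset.sum_eq_single 0, Finset.sum_eq_single 0]
    · simp [K3_zero, K3_top]
    · intro m _ hm; simp [K3_zero, hm]
    · simp
    · intro v _ hv; simp [K3_zero, hv]
    · simp
  have h2 : ∑ v ∈ Finset.range (n + 1), ∑ m ∈ Finset.range (c + 1),
      K3 (n + 1) v m * K3 (n + 1 - (n + 1)) (n + 1 - 1 - v) (c - m)
        = ((n + 1).choose c : ℚ) := by
    rw [Finset.sum_eq_single n, Finset.sum_eq_single c]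
    · simp [K3_zero, K3_top]
    · intro m hm hmc
      simp only [Finset.mem_range] at hm
      have : c - m ≠ 0 := by omega
      simp [K3_zero, this]
    · simp
    · intro v hv hvn
      simp only [Finset.mem_range] at hv
      have : n - v ≠ 0 := by omega
      simp [K3_zero, this]
    · simp
  rw [h1, h2]; ring

/-- The uniform recurrence for `K3`. -/
theorem K3_rec (n l c : ℕ) : K3 (n + 1) l c =
    (if (n + 1) % 2 = 1 then ((-1 : ℚ) / 2) ^ (l % 2) * K3 ((n + 1) / 2) (l / 2) (c / 2) else 0)
      + (1 / 2) * ∑ δ ∈ Finset.range 2, if δ ≤ c then conv3 n l (c - δ) else 0 := by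
  by_cases hc : n + 1 < c
  · rw [K3_c_gt _ _ _ hc, Finset.sum_eq_zero]
    · split_ifs with h
      · rw [K3_c_gt ((n + 1) / 2) _ (c / 2) (by omega)]; simp
      · simp
    · intro δ hδ
      simp only [Finset.mem_range] at hδ
      rw [conv3_c_gt _ _ _ (by omega)]; simp
  rcases Nat.eq_zero_or_pos n with rfl | hn
  · rcases l with _ | _ | l
    · have : c / 2 = 0 := by omega
      interval_cases c <;> simp [K3_top, K3_zero, conv3]
    · rw [K3_l_ge _ _ _ (by omega) (by omega)]
      have : c = 0 ∨ c = 1 := by omega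
      rcases this with rfl | rfl <;>
        norm_num [K3_zero, conv3, Finset.sum_range_succ]
    · rw [K3_l_gt _ _ _ (by omega), K3_l_gt _ ((l + 1 + 1) / 2) _ (by omega)]
      simp [conv3_l_gt]
  by_cases hl : n + 1 ≤ l
  · rw [K3_l_ge _ _ _ (by omega) hl, K3_l_ge ((n + 1) / 2) (l / 2) _ (by omega) (by omega)]
    have : ∀ c, conv3 n l c = 0 := by
      intro c
      rcases Nat.eq_or_lt_of_le hl with h | h
      · rw [← h]; exact conv3_l_eq n c hn
      · exact conv3_l_gt n l c h
    simp [this]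
  by_cases hln : l = n
  · subst hln
    obtain ⟨j, rfl⟩ : ∃ j, l = j + 1 := ⟨l - 1, by omega⟩
    rw [K3_top]
    have h0 : (if (j + 1 + 1) % 2 = 1 then ((-1 : ℚ) / 2) ^ ((j + 1) % 2) *
        K3 ((j + 1 + 1) / 2) ((j + 1) / 2) (c / 2) else 0) = 0 := by
      split_ifs with h
      · rw [K3_l_ge _ _ _ (by omega) (by omega), mul_zero]
      · rfl
    rw [h0]
    cases c with
    | zero => simp [Finset.sum_range_succ, conv3_top]
    | succ c =>
      simp [Finset.sum_range_succ, conv3_top, Nat.choose_succ_succ (j + 1) c]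
      ring
  by_cases hl0 : l = 0
  · subst hl0
    obtain ⟨j, rfl⟩ : ∃ j, n = j + 1 := ⟨n - 1, by omega⟩
    have hz : ∀ c, conv3 (j + 1) 0 c = 0 := by intro c; simp [conv3]
    simp only [hz]
    rw [K3, if_neg (by omega), if_neg (by omega), if_pos rfl]
    simp only [ite_self, Finset.sum_const_zero, mul_zero, add_zero, Nat.zero_mod, pow_zero,
      one_mul, Nat.zero_div]
    by_cases hp : (j + 1 + 1) % 2 = 1
    · rw [if_pos hp]
      obtain ⟨i, hi⟩ : ∃ i, j = 2 * i + 1 := ⟨j / 2, by omega⟩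
      subst hi
      have e : (2 * i + 1 + 1 + 1) / 2 = i + 1 := by omega
      rw [e]
      have key : (∃ r : ℕ, 1 ≤ r ∧ 2 * i + 1 + 1 + 1 = 2 ^ r - 1) ↔
          (∃ r : ℕ, 1 ≤ r ∧ i + 1 = 2 ^ r - 1) := by
        constructor
        · rintro ⟨r, hr, h⟩
          rcases r with _ | _ | r
          · omega
          · simp at h
          · refine ⟨r + 1, by omega, ?_⟩
            rw [pow_succ 2 (r + 1)] at h; omega
        · rintro ⟨r, hr, h⟩
          refine ⟨r + 1, by omega, ?_⟩
          rw [pow_succ]; omega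
      rcases Nat.eq_zero_or_pos i with rfl | hi
      · have h1 : ∃ r : ℕ, 1 ≤ r ∧ 0 + 1 = 2 ^ r - 1 := ⟨1, le_refl _, rfl⟩
        rw [if_pos (key.2 h1), K3_top]
        have : c / 2 = 0 ∨ c / 2 = 1 := by omega
        rcases this with h | h <;> simp [h]
      · have h2 : ¬ (i + 1 ≤ 0 ∨ i + 1 < c / 2) := by omega
        have h3 : ¬ (0 = i) := by omega
        rw [K3, if_neg h2, if_neg h3, if_pos rfl]
        by_cases h4 : ∃ r : ℕ, 1 ≤ r ∧ i + 1 = 2 ^ r - 1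
        · rw [if_pos h4, if_pos (key.2 h4)]
        · rw [if_neg h4, if_neg (fun h => h4 (key.1 h))]
    · rw [if_neg hp, if_neg]
      rintro ⟨r, hr, h⟩
      obtain ⟨s, rfl⟩ : ∃ s, r = s + 1 := ⟨r - 1, by omega⟩
      rw [pow_succ] at h
      have := Nat.pow_pos (n := s) (show 0 < 2 by norm_num)
      omega
  · rw [K3, if_neg (by omega), if_neg hln, if_neg hl0]
    congr 2
    refine Finset.sum_congr rfl fun δ _ => ?_
    congr 1
    unfold conv3
    exact Finset.sum_attach (Finset.range (n + 1)) (fun k => ∑ v ∈ Finset.range l,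
      ∑ m ∈ Finset.range (c - δ + 1), K3 k v m * K3 (n - k) (l - 1 - v) (c - δ - m))

/-- Row sums of `K3`. -/
noncomputable def S (n c : ℕ) : ℚ := ∑ l ∈ Finset.range (n + 1), K3 n l c

theorem S_ext (n c N : ℕ) (h : n + 1 ≤ N) : ∑ l ∈ Finset.range N, K3 n l c = S n c := by
  unfold S
  symm
  apply Finset.sum_subset
  · intro x; simp only [Finset.mem_range]; omega
  · intro x _ hx
    simp only [Finset.mem_range] at hx
    exact K3_l_gt _ _ _ (by omega)

theorem sum_half (N M c : ℕ) :
    ∑ l ∈ Finset.range (2 * M), ((-1 : ℚ) / 2) ^ (l % 2) * K3 N (l / 2) c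
      = (1 / 2) * ∑ l ∈ Finset.range M, K3 N l c := by
  induction M with
  | zero => simp
  | succ M ih =>
    rw [show 2 * (M + 1) = 2 * M + 1 + 1 by ring, Finset.sum_range_succ, Finset.sum_range_succ,
      ih, Finset.sum_range_succ, show (2 * M) % 2 = 0 by omega,
      show (2 * M + 1) % 2 = 1 by omega, show (2 * M) / 2 = M by omega,
      show (2 * M + 1) / 2 = M by omega]
    ring

theorem sum_prod (k j m d : ℕ) :
    ∑ l ∈ Finset.range (k + j + 2), ∑ v ∈ Finset.range l, K3 k v m * K3 j (l - 1 - v) d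
      = S k m * S j d := by
  rw [Finset.sum_range_succ']
  simp only [Finset.range_zero, Finset.sum_empty, add_zero, Nat.add_sub_cancel]
  rw [Finset.sum_range_diag_flip (k + j + 1) (fun v w => K3 k v m * K3 j w d),
    ← S_ext k m (k + j + 1) (by omega), Finset.sum_mul]
  refine Finset.sum_congr rfl fun v _ => ?_
  rw [← Finset.mul_sum]
  by_cases h : k < v
  · rw [K3_l_gt _ _ _ h]; simp
  · rw [S_ext j d _ (by omega)]

theorem sum_conv3 (n c : ℕ) : ∑ l ∈ Finset.range (n + 2), conv3 n l c = conv S n c := by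
  unfold conv3 conv
  rw [Finset.sum_comm]
  refine Finset.sum_congr rfl fun k hk => ?_
  simp only [Finset.mem_range] at hk
  have : ∀ l, ∑ v ∈ Finset.range l, ∑ m ∈ Finset.range (c + 1),
      K3 k v m * K3 (n - k) (l - 1 - v) (c - m) = ∑ m ∈ Finset.range (c + 1),
      ∑ v ∈ Finset.range l, K3 k v m * K3 (n - k) (l - 1 - v) (c - m) :=
    fun l => Finset.sum_comm
  simp only [this]
  rw [Finset.sum_comm]
  refine Finset.sum_congr rfl fun m _ => ?_
  rw [← sum_prod, show k + (n - k) + 2 = n + 2 by omega]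

theorem S_rec (n c : ℕ) : S (n + 1) c =
    (if (n + 1) % 2 = 1 then (1 / 2) * S ((n + 1) / 2) (c / 2) else 0)
      + (1 / 2) * ∑ δ ∈ Finset.range 2, if δ ≤ c then conv S n (c - δ) else 0 := by
  rw [S]
  simp only [K3_rec]
  rw [Finset.sum_add_distrib, ← Finset.mul_sum, Finset.sum_comm]
  congr 1
  · split_ifs with h
    · rw [show n + 1 + 1 = 2 * ((n + 1) / 2 + 1) by omega, sum_half]
      rfl
    · simp
  · congr 1
    refine Finset.sum_congr rfl fun δ _ => ?_
    split_ifs with h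
    · exact sum_conv3 n _
    · simp

theorem B2_k_gt (n k : ℕ) (h : n < k) : B2 n k = 0 := by
  rcases n with _ | _ | n
  · rw [B2, if_neg (by omega)]
  · rw [B2, if_neg (by omega)]
  · rw [B2, if_neg (by omega), if_pos h]

theorem B2_k_zero (n : ℕ) : B2 n 0 = B n := by
  rcases n with _ | _ | n
  · simp [B2, B]
  · simp [B2, B]
  · rw [B2, if_pos rfl]

theorem convB2_gt (n c : ℕ) (h : n < c) : conv B2 n c = 0 := by
  unfold conv
  refine Finset.sum_eq_zero fun k hk => Finset.sum_eq_zero fun m hm => ?_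
  simp only [Finset.mem_range] at hk hm
  by_cases h1 : k < m
  · rw [B2_k_gt k m h1, zero_mul]
  · rw [B2_k_gt (n - k) (c - m) (by omega), mul_zero]

theorem B2_rec (n c : ℕ) : B2 (n + 1) c =
    (if (n + 1) % 2 = 1 then (1 / 2) * B2 ((n + 1) / 2) (c / 2) else 0)
      + (1 / 2) * ∑ δ ∈ Finset.range 2, if δ ≤ c then conv B2 n (c - δ) else 0 := by
  by_cases hc : n + 1 < c
  · rw [B2_k_gt _ _ hc, Finset.sum_eq_zero]
    · split_ifs with h
      · rw [B2_k_gt ((n + 1) / 2) (c / 2) (by omega)]; simp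
      · simp
    · intro δ hδ
      simp only [Finset.mem_range] at hδ
      rw [convB2_gt _ _ (by omega)]; simp
  rcases n with _ | n
  · have : c = 0 ∨ c = 1 := by omega
    rcases this with rfl | rfl <;> norm_num [B2, conv, Finset.sum_range_succ]
  have hif : ∀ x : ℚ, (if (n + 1 + 1) % 2 = 1 then (1 / 2) * x else 0)
      = (1 / 2) * (if (n + 2) % 2 = 0 then 0 else x) := by
    intro x
    rcases Nat.mod_two_eq_zero_or_one (n + 2) with h | h <;> simp [h]
  have hhalf : (n + 2) % 2 = 1 → (n + 1 + 1) / 2 = (n + 1) / 2 := by omega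
  by_cases h0 : c = 0
  · subst h0
    rw [B2_k_zero, B, hif, B2_k_zero]
    rw [Finset.sum_attach (Finset.range (n + 2)) (fun k => B (n + 1 - k) * B k)]
    simp only [Finset.sum_range_succ _ 1, Finset.sum_range_one, conv, B2_k_zero, zero_add,
      Nat.zero_sub, le_refl, if_true]
    rw [mul_add, add_comm]
    congr 2
    · split_ifs with h
      · rfl
      · rw [hhalf (by omega)]
    · simp [mul_comm]
  · rw [B2, if_neg h0, if_neg (by omega), hif, mul_add, add_comm]
    congr 2
    · split_ifs with h
      · rfl
      · rw [hhalf (by omega)]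
    · refine Finset.sum_congr rfl fun δ hδ => ?_
      simp only [Finset.mem_range] at hδ
      rw [if_pos (by omega)]
      exact Finset.sum_attach (Finset.range (n + 2)) (fun l =>
        ∑ m ∈ Finset.range (c - δ + 1), B2 l m * B2 (n + 1 - l) (c - δ - m))

theorem S_eq_B2 (n : ℕ) : ∀ c, S n c = B2 n c := by
  induction n using Nat.strong_induction_on with
  | _ n ih =>
    intro c
    cases n with
    | zero => rw [S, zero_add, Finset.sum_range_one, K3_zero, B2]; simp
    | succ n =>
      rw [S_rec, B2_rec, ih _ (by omega)]
      have : ∀ c, conv S n c = conv B2 n c := by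
        intro c
        unfold conv
        refine Finset.sum_congr rfl fun k hk => Finset.sum_congr rfl fun m _ => ?_
        simp only [Finset.mem_range] at hk
        rw [ih k hk, ih (n - k) (by omega)]
      simp only [this]

/-- For all natural numbers `n` and `c`, `∑_{ℓ=0}^{n} K3 n ℓ c = B2 n c`. -/
theorem sum_K3_eq_B2 (n c : ℕ) : ∑ ℓ ∈ Finset.range (n + 1), K3 n ℓ c = B2 n c := by
  exact S_eq_B2 n c
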